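/- arXiv:2412.09923 — 2 statements merged into one kernel-verified Lean document; each statement's English description precedes it below -/
import Mathlib

section
/- Let q be a prime power and n an odd positive integer. For 1 ≤ s ≤ ⌊n/2⌋, the number of Euclidean self-orthogonal linear codes of length n and dimension s over F_q equals (∏_{i=0}^{s−1}(q^{n−1−2i} − 1)) / (∏_{j=1}^{s}(q^j − 1)). -/
/-!
Ordered bases of self-orthogonal codes are counted in two ways. An *isotropic frame* of length `k` is
a linearly independent family `v₁, …, v_k` in `F_q^n` with `v_i · v_j = 0` for all `i, j` (including
`i = j`).

Every self-orthogonal code of dimension `s` is spanned by `∏_{i<s} (q^s - q^i)` frames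
(`card_codes_mul`). On the other hand, a frame spanning `C` extends by the isotropic vectors of
`C^⊥` outside `C`. The central fact (`iso_card`) is that for `n` odd and `C` self-orthogonal of
dimension `k` there are `q^(n-1-k)` isotropic vectors in `C^⊥`. Hence there are
`∏_{i<s} (q^(n-1-i) - q^i)` frames of length `s` (`card_isoFrame`), and cancelling `∏_{i<s} q^i`
gives the formula.

For `q` even, the isotropic vectors of `C^⊥` form a hyperplane in it (`iso_card_even`). For `q` odd,
one reduces to a nondegenerate form on a complement of `C` in `C^⊥`, of odd dimension `n - 2k`
(`iso_card_odd`); after diagonalization its zeros are counted by splitting off two variables at a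
time (`diag_card`), using that a nondegenerate binary form takes all nonzero values equally often
(`binary_le`).
-/

open Module

/-! ### Zeros of diagonal quadratic forms in odd characteristic -/

/-- Over a finite field of odd order, a nondegenerate binary form `a x² + b y²` takes any nonzero value
`c'` at least as often as any other nonzero value `c`. Up to the factor `a` the form is the norm form
`x² - d y²`, which is multiplicative and represents `c' / c`; multiplying by an element of norm
`c' / c` carries the solutions for `c` injectively to solutions for `c'`. -/
lemma binary_le {F : Type*} [Field F] [Fintype F] [DecidableEq F] (h2 : Fintype.card F % 2 = 1)
    {a b : F} (ha : a ≠ 0) (hb : b ≠ 0) {c c' : F} (hc : c ≠ 0) (hc' : c' ≠ 0) :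
    Fintype.card {z : F × F // a * z.1 ^ 2 + b * z.2 ^ 2 = c} ≤
      Fintype.card {z : F × F // a * z.1 ^ 2 + b * z.2 ^ 2 = c'} := by
  obtain ⟨d, rfl⟩ : ∃ d, b = -(a * d) := ⟨-b / a, by field_simp⟩
  have hd : d ≠ 0 := by rintro rfl; simp at hb
  obtain ⟨u, v, huv⟩ : ∃ u v : F, u ^ 2 - d * v ^ 2 = c' / c := by
    obtain ⟨u, v, h⟩ := FiniteField.exists_root_sum_quadratic
      (f := (Polynomial.X ^ 2 - Polynomial.C (c' / c) : Polynomial F))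
      (g := Polynomial.C (-d) * Polynomial.X ^ 2)
      (Polynomial.degree_X_pow_sub_C (by norm_num) _)
      (Polynomial.degree_C_mul_X_pow 2 (neg_ne_zero.2 hd)) h2
    refine ⟨u, v, ?_⟩
    simp at h
    linear_combination h
  have he : c' / c ≠ 0 := div_ne_zero hc' hc
  refine Fintype.card_le_of_injective
    (fun z => ⟨(u * z.1.1 + d * v * z.1.2, v * z.1.1 + u * z.1.2), ?_⟩) ?_
  · have hz := z.2
    have hcc : (c' / c) * c = c' := by field_simp
    linear_combination (u ^ 2 - d * v ^ 2) * hz + c * huv + hcc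
  · rintro ⟨⟨x, y⟩, hz⟩ ⟨⟨x', y'⟩, hz'⟩ h
    simp only [Subtype.mk.injEq, Prod.mk.injEq] at h ⊢
    obtain ⟨h1, h3⟩ := h
    constructor <;> apply mul_left_cancel₀ he <;> rw [← huv]
    · linear_combination u * h1 - d * v * h3
    · linear_combination u * h3 - v * h1

/-- A nondegenerate diagonal quadratic form in an odd number `N` of variables over a field of odd
order `q` has `q ^ (N - 1)` zeros. Two variables are split off at a time: if the binary form takes
the value `0` exactly `M₀` times and each nonzero value `M₁` times, then `M₀ + (q - 1) M₁ = q²`, and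
the number of zeros becomes `q ^ (N - 1) M₀ + (q ^ N - q ^ (N - 1)) M₁ = q ^ (N + 1)`. -/
lemma diag_card {F : Type*} [Field F] [Fintype F] [DecidableEq F]
    (h2 : Fintype.card F % 2 = 1) (m : ℕ) (w : Fin (2 * m + 1) → F) (hw : ∀ i, w i ≠ 0) :
    Fintype.card {x : Fin (2 * m + 1) → F // ∑ i, w i * x i ^ 2 = 0} =
      Fintype.card F ^ (2 * m) := by
  induction m with
  | zero =>
    refine (Fintype.card_eq_one_iff.2 ⟨⟨0, by simp⟩, ?_⟩).trans (by simp)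
    rintro ⟨x, hx⟩
    ext i
    have hi : i = 0 := Fin.ext (by have := i.2; change (i : ℕ) = 0; omega)
    subst hi
    have h0 : w 0 * x 0 ^ 2 = 0 := by simpa using hx
    simpa [hw] using h0
  | succ m ih =>
    set q := Fintype.card F with hq
    let M : F → ℕ := fun c => Fintype.card {z : F × F // w 0 * z.1 ^ 2 + w 1 * z.2 ^ 2 = c}
    have hM : ∀ c, c ≠ 0 → M c = M 1 := fun c hc =>
      le_antisymm (binary_le h2 (hw 0) (hw 1) hc one_ne_zero)
        (binary_le h2 (hw 0) (hw 1) one_ne_zero hc)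
    have hq0 : 1 ≤ q := Fintype.card_pos
    have htot : M 0 + (q - 1) * M 1 = q ^ 2 := by
      have h : ∑ c, M c = q ^ 2 := by
        rw [← Fintype.card_sigma, Fintype.card_congr (Equiv.sigmaFiberEquiv _), Fintype.card_prod,
          sq]
      rw [← Finset.add_sum_erase _ _ (Finset.mem_univ (0 : F)),
        Finset.sum_congr rfl (fun c hc => hM c (Finset.ne_of_mem_erase hc))] at h
      simpa [Finset.card_erase_of_mem] using h
    let w' : Fin (2 * m + 1) → F := fun i => w i.succ.succ
    let Z : (Fin (2 * m + 1) → F) → F := fun y => ∑ i, w' i * y i ^ 2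
    have hZ : Fintype.card {y // Z y = 0} = q ^ (2 * m) := ih w' fun i => hw _
    have hZ' : Fintype.card {y // ¬ Z y = 0} = q ^ (2 * m + 1) - q ^ (2 * m) := by
      rw [Fintype.card_subtype_compl, hZ]; simp [hq]
    have hsplit (f : Fin (2 * (m + 1) + 1) → F) :
        ∑ i, f i = f 0 + (f 1 + ∑ i : Fin (2 * m + 1), f i.succ.succ) :=
      (Fin.sum_univ_succ f).trans (congrArg _ (Fin.sum_univ_succ _))
    -- fibre over the last coordinates: the first two solve a binary equation
    let e : {x : Fin (2 * (m + 1) + 1) → F // ∑ i, w i * x i ^ 2 = 0} ≃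
        Σ y : Fin (2 * m + 1) → F, {z : F × F // w 0 * z.1 ^ 2 + w 1 * z.2 ^ 2 = - Z y} :=
      { toFun := fun x => ⟨fun i => x.1 i.succ.succ, (x.1 0, x.1 1), by
          have h := x.2
          rw [hsplit] at h
          simp only [Z, w']
          linear_combination h⟩
        invFun := fun p => ⟨Fin.cons p.2.1.1 (Fin.cons p.2.1.2 p.1), by
          have h := p.2.2
          rw [hsplit]
          simp only [Z, w'] at h
          refine Eq.trans ?_ (sub_eq_zero.2 h)
          change w 0 * p.2.1.1 ^ 2 + (w 1 * p.2.1.2 ^ 2 + ∑ i, w i.succ.succ * p.1 i ^ 2) = _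
          ring⟩
        left_inv := fun x => by
          ext i
          refine Fin.cases rfl (fun i => Fin.cases rfl (fun i => rfl) i) i
        right_inv := fun p => rfl }
    have hsum : ∑ y, M (-Z y) = q ^ (2 * m) * M 0 + (q ^ (2 * m + 1) - q ^ (2 * m)) * M 1 := by
      rw [← hZ', ← hZ, Fintype.card_subtype, Fintype.card_subtype,
        ← Finset.sum_filter_add_sum_filter_not Finset.univ (fun y => Z y = 0),
        Finset.sum_congr rfl (g := fun _ => M 0) (fun y hy => by
          rw [(Finset.mem_filter.1 hy).2, neg_zero]),
        Finset.sum_congr rfl (g := fun _ => M 1) (fun y hy => 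
          hM _ (neg_ne_zero.2 (Finset.mem_filter.1 hy).2))]
      simp
    rw [Fintype.card_congr e, Fintype.card_sigma]
    refine hsum.trans ?_
    have : q ^ (2 * m + 1) - q ^ (2 * m) = q ^ (2 * m) * (q - 1) := by
      rw [Nat.mul_sub, mul_one, pow_succ]
    rw [this, mul_assoc, ← mul_add, htot]
    ring

lemma diag_card' {F : Type*} [Field F] [Fintype F]
    (h2 : Fintype.card F % 2 = 1) (N : ℕ) (hN : Odd N) (w : Fin N → F) (hw : ∀ i, w i ≠ 0) :
    Nat.card {x : Fin N → F // ∑ i, w i * x i ^ 2 = 0} = Fintype.card F ^ (N - 1) := by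
  classical
  obtain ⟨m, rfl⟩ := hN
  rw [Nat.card_eq_fintype_card, diag_card h2 m w hw, Nat.add_sub_cancel]

/-- A nondegenerate symmetric form on a space of odd dimension `N` over a field of odd order `q` has
`q ^ (N - 1)` isotropic vectors, by diagonalization. -/
lemma nondeg_card {F V : Type*} [Field F] [Fintype F] [AddCommGroup V] [Module F V]
    [FiniteDimensional F V] (h2 : Fintype.card F % 2 = 1) (B : LinearMap.BilinForm F V)
    (hs : B.IsSymm) (hB : ∀ x, (∀ y, B x y = 0) → x = 0) (hodd : Odd (finrank F V)) :
    Nat.card {x : V // B x x = 0} = Fintype.card F ^ (finrank F V - 1) := by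
  have hchar : ringChar F ≠ 2 := fun h => by
    have := FiniteField.even_card_of_char_two h
    omega
  let _ : Invertible (2 : F) := invertibleOfNonzero (Ring.two_ne_zero hchar)
  have hsep : (QuadraticMap.associated (R := F) B.toQuadraticMap).SeparatingLeft := by
    rw [QuadraticMap.associated_left_inverse F fun x y => hs.eq x y]
    exact hB
  obtain ⟨w, ⟨e⟩⟩ := QuadraticForm.equivalent_weightedSumSquares_units_of_nondegenerate' _ hsep
  rw [← diag_card' h2 _ hodd (fun i => (w i : F)) (fun i => (w i).ne_zero)]
  refine Nat.card_congr (e.toEquiv.subtypeEquiv fun x => ?_)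
  have h := e.map_app x
  rw [QuadraticMap.weightedSumSquares_apply] at h
  rw [← LinearMap.BilinMap.toQuadraticMap_apply, ← h]
  simp [Units.smul_def, sq]

/-! ### Isotropic vectors orthogonal to a self-orthogonal code -/

/-- The standard bilinear form `⟨x, y⟩ = ∑ x_i y_i` on `F ^ n`. -/
abbrev dotForm (F : Type*) [Field F] (n : ℕ) : LinearMap.BilinForm F (Fin n → F) :=
  dotProductBilin F F

lemma dotForm_symm {F : Type*} [Field F] (n : ℕ) : (dotForm F n).IsSymm :=
  ⟨fun x y => by simp [dotProduct_comm]⟩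

lemma dotForm_nondeg {F : Type*} [Field F] (n : ℕ) : (dotForm F n).Nondegenerate := by
  exact ⟨fun x hx => dotProduct_eq_zero x hx,
    fun x hx => dotProduct_eq_zero x fun y => (dotProduct_comm x y).trans (hx y)⟩

/-- Odd characteristic: for a self-orthogonal code `C`, a complement `D` of `C` in `C^⊥` carries a
nondegenerate form because `C^⊥⊥ = C`, and `c + d` is isotropic exactly when `d` is. -/
lemma iso_card_odd {F : Type*} [Field F] [Fintype F] (h2 : Fintype.card F % 2 = 1)
    {n : ℕ} (hn : Odd n) (C : Submodule F (Fin n → F))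
    (hC : C ≤ (dotForm F n).orthogonal C) :
    Nat.card {x : Fin n → F // x ∈ (dotForm F n).orthogonal C ∧ x ⬝ᵥ x = 0} =
      Fintype.card F ^ (n - 1 - finrank F C) := by
  set P := (dotForm F n).orthogonal C with hP
  have hrefl := (dotForm_symm (F := F) n).isRefl
  obtain ⟨D₀, hD₀⟩ := C.exists_isCompl
  set D := D₀ ⊓ P with hD
  -- by the modular law, intersecting a complement of `C` with `P = C^⊥ ≥ C` gives one inside `P`
  have hsup : C ⊔ D = P := by
    rw [hD, ← sup_inf_assoc_of_le _ hC, hD₀.sup_eq_top, top_inf_eq]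
  have hinf : C ⊓ D = ⊥ := by
    rw [hD, ← inf_assoc, hD₀.inf_eq_bot, bot_inf_eq]
  have hPdim : finrank F P = n - finrank F C := by
    rw [hP, LinearMap.BilinForm.finrank_orthogonal (dotForm_nondeg n), finrank_fin_fun]
  have hCn : finrank F C ≤ n := by simpa using C.finrank_le
  have hdim : finrank F C + finrank F D = n - finrank F C := by
    have := Submodule.finrank_sup_add_finrank_inf_eq C D
    rw [hsup, hinf, finrank_bot, hPdim] at this
    omega
  have hDP : ∀ d ∈ D, ∀ c ∈ C, c ⬝ᵥ d = 0 := fun d hd c hc => hd.2 c hc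
  have hCC : ∀ d ∈ C, ∀ c ∈ C, c ⬝ᵥ d = 0 := fun d hd c hc => hC hd c hc
  have hcard := nondeg_card h2 ((dotForm F n).restrict D)
    ⟨fun x y => (dotForm_symm n).eq x.1 y.1⟩
    (by
      intro x hx
      have hx' : (x : Fin n → F) ∈ C := by
        rw [← LinearMap.BilinForm.orthogonal_orthogonal (dotForm_nondeg n) hrefl C]
        intro y hy
        rw [← hP, ← hsup] at hy
        obtain ⟨c, hc, d, hd, rfl⟩ := Submodule.mem_sup.1 hy
        change (c + d) ⬝ᵥ (x : Fin n → F) = 0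
        rw [add_dotProduct, hDP _ x.2 _ hc, zero_add, dotProduct_comm]
        exact hx ⟨d, hd⟩
      have : (x : Fin n → F) ∈ C ⊓ D := ⟨hx', x.2⟩
      rw [hinf] at this
      exact Subtype.ext this)
    (by rw [Nat.odd_iff] at hn ⊢; omega)
  have hq : ∀ c ∈ C, ∀ d ∈ D, (c + d) ⬝ᵥ (c + d) = d ⬝ᵥ d := fun c hc d hd => by
    rw [add_dotProduct, dotProduct_add, dotProduct_add, hCC c hc c hc, hDP d hd c hc,
      dotProduct_comm d c, hDP d hd c hc]
    simp
  let f : C × {x : D // (dotForm F n).restrict D x x = 0} → {x : Fin n → F // x ∈ P ∧ x ⬝ᵥ x = 0} :=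
    fun z => ⟨z.1 + z.2.1, P.add_mem (hC z.1.2) z.2.1.2.2, (hq _ z.1.2 _ z.2.1.2).trans z.2.2⟩
  have hf : Function.Bijective f := by
    constructor
    · rintro ⟨⟨c, hc⟩, ⟨⟨d, hd⟩, h⟩⟩ ⟨⟨c', hc'⟩, ⟨⟨d', hd'⟩, h'⟩⟩ hh
      have hh : c + d = c' + d' := congrArg Subtype.val hh
      have h1 : c - c' ∈ C ⊓ D := ⟨C.sub_mem hc hc', by
        rw [show c - c' = d' - d by rw [sub_eq_sub_iff_add_eq_add, hh, add_comm]]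
        exact D.sub_mem hd' hd⟩
      rw [hinf, Submodule.mem_bot, sub_eq_zero] at h1
      subst h1
      have := add_left_cancel hh
      subst this
      rfl
    · rintro ⟨x, hx, hxx⟩
      rw [← hsup] at hx
      obtain ⟨c, hc, d, hd, rfl⟩ := Submodule.mem_sup.1 hx
      exact ⟨⟨⟨c, hc⟩, ⟨⟨d, hd⟩, (hq c hc d hd).symm.trans hxx⟩⟩, rfl⟩
  rw [← Nat.card_eq_of_bijective f hf, Nat.card_prod, hcard, Module.natCard_eq_pow_finrank (K := F),
    Nat.card_eq_fintype_card, ← pow_add]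
  congr 1
  rw [Nat.odd_iff] at hn
  omega

/-- Even characteristic: `x · x = (𝟙 · x) ^ 2` for the all-ones vector `𝟙`, so the isotropic vectors of
`C^⊥` form the subspace `(C + ⟨𝟙⟩)^⊥`. As `n` is odd, `𝟙 · 𝟙 = 1`, so `𝟙` does not lie in the
self-orthogonal code `C`. -/
lemma iso_card_even {F : Type*} [Field F] [Fintype F] (h2 : Fintype.card F % 2 = 0)
    {n : ℕ} (hn : Odd n) (C : Submodule F (Fin n → F))
    (hC : C ≤ (dotForm F n).orthogonal C) :
    Nat.card {x : Fin n → F // x ∈ (dotForm F n).orthogonal C ∧ x ⬝ᵥ x = 0} =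
      Fintype.card F ^ (n - 1 - finrank F C) := by
  have : CharP F 2 := ringChar.of_eq (FiniteField.even_card_iff_char_two.2 h2)
  have hsq (x : Fin n → F) : x ⬝ᵥ x = ((1 : Fin n → F) ⬝ᵥ x) ^ 2 := by
    rw [one_dotProduct, sum_pow_char 2]
    simp [dotProduct, sq]
  have h1 : (1 : Fin n → F) ⬝ᵥ 1 = 1 := by
    obtain ⟨m, rfl⟩ := hn
    simp [CharTwo.two_eq_zero]
  have h1C : (1 : Fin n → F) ∉ C := fun h => by
    have : (1 : Fin n → F) ⬝ᵥ 1 = 0 := hC h 1 h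
    exact one_ne_zero (h1.symm.trans this)
  have hdim : finrank F ↥(C ⊔ F ∙ (1 : Fin n → F)) = finrank F C + 1 := by
    have := Submodule.finrank_sup_add_finrank_inf_eq C (F ∙ (1 : Fin n → F))
    have h10 : (1 : Fin n → F) ≠ 0 := fun h => h1C (h ▸ C.zero_mem)
    rw [(Submodule.disjoint_span_singleton' h10).2 h1C |>.eq_bot, finrank_bot,
      finrank_span_singleton h10] at this
    omega
  have key : Nat.card {x : Fin n → F // x ∈ (dotForm F n).orthogonal C ∧ x ⬝ᵥ x = 0} =
      Nat.card ((dotForm F n).orthogonal (C ⊔ F ∙ (1 : Fin n → F))) := by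
    refine Nat.card_congr (Equiv.subtypeEquivRight fun x => ?_)
    rw [hsq, sq_eq_zero_iff]
    constructor
    · rintro ⟨h, h'⟩ y hy
      obtain ⟨c, hc, d, hd, rfl⟩ := Submodule.mem_sup.1 hy
      obtain ⟨a, rfl⟩ := Submodule.mem_span_singleton.1 hd
      change (c + a • (1 : Fin n → F)) ⬝ᵥ x = 0
      rw [add_dotProduct, smul_dotProduct, h', show c ⬝ᵥ x = 0 from h c hc]
      simp
    · intro h
      exact ⟨fun c hc => h c (Submodule.mem_sup_left hc),
        h 1 (Submodule.mem_sup_right (Submodule.mem_span_singleton_self _))⟩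
  rw [key, Module.natCard_eq_pow_finrank (K := F), Nat.card_eq_fintype_card,
    LinearMap.BilinForm.finrank_orthogonal (dotForm_nondeg n), hdim, finrank_fin_fun]
  congr 1
  omega

lemma iso_card {F : Type*} [Field F] [Fintype F]
    {n : ℕ} (hn : Odd n) (C : Submodule F (Fin n → F))
    (hC : C ≤ (dotForm F n).orthogonal C) :
    Nat.card {x : Fin n → F // x ∈ (dotForm F n).orthogonal C ∧ x ⬝ᵥ x = 0} =
      Fintype.card F ^ (n - 1 - finrank F C) := by
  rcases Nat.mod_two_eq_zero_or_one (Fintype.card F) with h | h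
  exacts [iso_card_even h hn C hC, iso_card_odd h hn C hC]

/-- The number of isotropic vectors that extend a self-orthogonal code by one dimension. -/
lemma iso_card_sdiff {F : Type*} [Field F] [Fintype F]
    {n : ℕ} (hn : Odd n) (C : Submodule F (Fin n → F))
    (hC : C ≤ (dotForm F n).orthogonal C) :
    Nat.card {x : Fin n → F // (x ∈ (dotForm F n).orthogonal C ∧ x ⬝ᵥ x = 0) ∧ x ∉ C} =
      Fintype.card F ^ (n - 1 - finrank F C) - Fintype.card F ^ finrank F C := by
  have h := Set.ncard_sdiff (s := (C : Set (Fin n → F)))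
    (t := {x : Fin n → F | x ∈ (dotForm F n).orthogonal C ∧ x ⬝ᵥ x = 0})
    (fun x hx => ⟨hC hx, hC hx x hx⟩)
  have h2 : (C : Set (Fin n → F)).ncard = Fintype.card F ^ finrank F C := by
    rw [← Nat.card_coe_set_eq, ← Nat.card_eq_fintype_card]
    exact Module.natCard_eq_pow_finrank (K := F)
  rw [← iso_card hn C hC, ← h2]
  exact h

/-! ### Counting isotropic frames -/

/-- Isotropic frames of length `k`: linearly independent, pairwise orthogonal families of isotropic
vectors in `F ^ n`; equivalently, ordered bases of the `k`-dimensional self-orthogonal codes. -/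
abbrev IsoFrame (F : Type*) [Field F] (n k : ℕ) : Type _ :=
  {v : Fin k → Fin n → F // LinearIndependent F v ∧ ∀ i j, v i ⬝ᵥ v j = 0}

lemma span_le_orthogonal {F : Type*} [Field F] {n k : ℕ} {v : Fin k → Fin n → F}
    (hv : ∀ i j, v i ⬝ᵥ v j = 0) :
    Submodule.span F (Set.range v) ≤
      (dotForm F n).orthogonal (Submodule.span F (Set.range v)) := by
  rw [Submodule.span_le]
  rintro _ ⟨j, rfl⟩ c hc
  change c ⬝ᵥ v j = 0
  induction hc using Submodule.span_induction with
  | mem x hx => obtain ⟨i, rfl⟩ := hx; exact hv i j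
  | zero => simp
  | add x y _ _ hx hy => rw [add_dotProduct, hx, hy, add_zero]
  | smul a x _ hx => rw [smul_dotProduct, hx, smul_zero]

/-- A frame of length `k + 1` is a frame of length `k`, with span `C`, together with an isotropic
vector of `C^⊥` outside `C`, put in front. -/
def isoFrameSucc (F : Type*) [Field F] (n k : ℕ) :
    IsoFrame F n (k + 1) ≃ Σ v : IsoFrame F n k,
      {x : Fin n → F // (x ∈ (dotForm F n).orthogonal (Submodule.span F (Set.range v.1)) ∧
        x ⬝ᵥ x = 0) ∧ x ∉ Submodule.span F (Set.range v.1)} where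
  toFun v := ⟨⟨Fin.tail v.1, (linearIndependent_finSucc.1 v.2.1).1, fun i j => v.2.2 _ _⟩,
    v.1 0, ⟨by
      intro c hc
      change c ⬝ᵥ v.1 0 = 0
      induction hc using Submodule.span_induction with
      | mem x hx => obtain ⟨i, rfl⟩ := hx; exact v.2.2 _ _
      | zero => simp
      | add x y _ _ hx hy => rw [add_dotProduct, hx, hy, add_zero]
      | smul a x _ hx => rw [smul_dotProduct, hx, smul_zero], v.2.2 0 0⟩,
    (linearIndependent_finSucc.1 v.2.1).2⟩
  invFun p := ⟨Fin.cons p.2.1 p.1.1, linearIndependent_finCons.2 ⟨p.1.2.1, p.2.2.2⟩, by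
    have h (i) : p.1.1 i ⬝ᵥ p.2.1 = 0 := p.2.2.1.1 _ (Submodule.subset_span ⟨i, rfl⟩)
    intro i j
    refine Fin.cases ?_ (fun i => ?_) i <;> refine Fin.cases ?_ (fun j => ?_) j
    · exact p.2.2.1.2
    · exact (dotProduct_comm _ _).trans (h j)
    · exact h i
    · exact p.1.2.2 i j⟩
  left_inv v := Subtype.ext (Fin.cons_self_tail v.1)
  right_inv _ := rfl

lemma card_isoFrame (F : Type*) [Field F] [Fintype F] {n : ℕ} (hn : Odd n) (k : ℕ) :
    Nat.card (IsoFrame F n k) =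
      ∏ i ∈ Finset.range k, (Fintype.card F ^ (n - 1 - i) - Fintype.card F ^ i) := by
  classical
  induction k with
  | zero =>
    rw [Finset.prod_range_zero, Nat.card_eq_one_iff_unique]
    exact ⟨⟨fun v w => Subtype.ext (Subsingleton.elim _ _)⟩,
      ⟨⟨Fin.elim0, linearIndependent_empty_type, fun i => i.elim0⟩⟩⟩
  | succ k ih =>
    have hfib (v : IsoFrame F n k) := iso_card_sdiff hn _ (span_le_orthogonal v.2.2)
    simp_rw [fun v : IsoFrame F n k => finrank_span_eq_card v.2.1, Fintype.card_fin] at hfib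
    rw [Nat.card_congr (isoFrameSucc F n k), Nat.card_sigma, Finset.sum_congr rfl fun v _ => hfib v,
      Finset.sum_const, smul_eq_mul, Finset.card_univ, ← Nat.card_eq_fintype_card, ih,
      Finset.prod_range_succ]

/-- The frames spanning a given self-orthogonal code are its ordered bases. -/
noncomputable def isoFrameFiber (F : Type*) [Field F] (n s : ℕ) (C : Submodule F (Fin n → F))
    (hs : finrank F C = s) (hC : ∀ c ∈ C, ∀ c' ∈ C, ∑ i, c i * c' i = 0) :
    {v : IsoFrame F n s // Submodule.span F (Set.range v.1) = C} ≃
      {u : Fin s → C // LinearIndependent F u} where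
  toFun v := ⟨fun i => ⟨v.1.1 i, v.2.le (Submodule.subset_span ⟨i, rfl⟩)⟩,
    LinearIndependent.of_comp C.subtype v.1.2.1⟩
  invFun u := ⟨⟨fun i => (u.1 i : Fin n → F), u.2.map' C.subtype C.ker_subtype,
      fun i j => hC _ (u.1 i).2 _ (u.1 j).2⟩, by
    refine Submodule.eq_of_le_of_finrank_eq
      (Submodule.span_le.2 (by rintro _ ⟨i, rfl⟩; exact (u.1 i).2)) ?_
    exact (finrank_span_eq_card (u.2.map' C.subtype C.ker_subtype)).trans
      ((Fintype.card_fin s).trans hs.symm)⟩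
  left_inv _ := rfl
  right_inv _ := rfl

/-- Each self-orthogonal code of dimension `s` is spanned by as many isotropic frames as it has ordered
bases. -/
lemma card_codes_mul (F : Type*) [Field F] [Fintype F] (n s : ℕ) :
    Nat.card (IsoFrame F n s) =
      Nat.card {C : Submodule F (Fin n → F) // Module.finrank F C = s ∧
        ∀ c ∈ C, ∀ c' ∈ C, ∑ i, c i * c' i = 0} *
      ∏ i ∈ Finset.range s, (Fintype.card F ^ s - Fintype.card F ^ i) := by
  classical
  let g : IsoFrame F n s → {C : Submodule F (Fin n → F) // Module.finrank F C = s ∧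
        ∀ c ∈ C, ∀ c' ∈ C, ∑ i, c i * c' i = 0} := fun v =>
    ⟨Submodule.span F (Set.range v.1), by rw [finrank_span_eq_card v.2.1, Fintype.card_fin],
      fun c hc c' hc' => span_le_orthogonal v.2.2 hc' c hc⟩
  have := Fintype.ofFinite {C : Submodule F (Fin n → F) // Module.finrank F C = s ∧
        ∀ c ∈ C, ∀ c' ∈ C, ∑ i, c i * c' i = 0}
  have hfib (C) : Nat.card {v // g v = C} =
      ∏ i ∈ Finset.range s, (Fintype.card F ^ s - Fintype.card F ^ i) := by
    rw [Nat.card_congr ((Equiv.subtypeEquivRight fun v => Subtype.ext_iff).trans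
      (isoFrameFiber F n s C.1 C.2.1 C.2.2)), card_linearIndependent C.2.1.ge, C.2.1,
      Finset.prod_range]
  rw [← Nat.card_congr (Equiv.sigmaFiberEquiv g), Nat.card_sigma,
    Finset.sum_congr rfl fun C _ => hfib C, Finset.sum_const, smul_eq_mul, Finset.card_univ,
    ← Nat.card_eq_fintype_card]

/-! ### The number of self-orthogonal codes -/

theorem stmt_3 (p m q n s : ℕ) (hp : p.Prime) (hm : 0 < m) (hq : q = p ^ m)
    (hn : Odd n) (hs1 : 1 ≤ s) (hs2 : s ≤ n / 2)
    (F : Type) [Field F] [Fintype F] (hF : Fintype.card F = q) :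
    Nat.card {C : Submodule F (Fin n → F) // Module.finrank F C = s ∧
        ∀ c ∈ C, ∀ c' ∈ C, ∑ i, c i * c' i = 0} *
      ∏ j ∈ Finset.Icc 1 s, (q ^ j - 1) =
    ∏ i ∈ Finset.range s, (q ^ (n - 1 - 2 * i) - 1) := by
  have hq0 : 0 < q := hF ▸ Fintype.card_pos
  have h := (card_codes_mul F n s).symm.trans (card_isoFrame F hn s)
  rw [hF] at h
  have hL : ∏ i ∈ Finset.range s, (q ^ s - q ^ i) =
      (∏ i ∈ Finset.range s, q ^ i) * ∏ j ∈ Finset.Icc 1 s, (q ^ j - 1) := by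
    have hr : ∏ j ∈ Finset.Icc 1 s, (q ^ j - 1) = ∏ i ∈ Finset.range s, (q ^ (s - i) - 1) := by
      refine (Finset.prod_bij' (fun i _ => s - i) (fun j _ => s - j) ?_ ?_ ?_ ?_ ?_) <;>
        intro a ha <;> simp only [Finset.mem_range, Finset.mem_Icc] at ha ⊢
      · omega
      · omega
      · omega
      · omega
      · rw [Nat.sub_sub_self ha.2]
    rw [hr, ← Finset.prod_mul_distrib]
    refine Finset.prod_congr rfl fun i hi => ?_
    rw [Nat.mul_sub, mul_one, ← pow_add, Nat.add_sub_of_le (Finset.mem_range.1 hi).le]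
  have hR : ∏ i ∈ Finset.range s, (q ^ (n - 1 - i) - q ^ i) =
      (∏ i ∈ Finset.range s, q ^ i) * ∏ i ∈ Finset.range s, (q ^ (n - 1 - 2 * i) - 1) := by
    rw [← Finset.prod_mul_distrib]
    refine Finset.prod_congr rfl fun i hi => ?_
    have := Finset.mem_range.1 hi
    rw [Nat.mul_sub, mul_one, ← pow_add]
    congr 2
    omega
  rw [hL, hR, mul_left_comm] at h
  exact Nat.eq_of_mul_eq_mul_left (Finset.prod_pos fun i _ => pow_pos hq0 i) h
end

section
/- Let p be an odd prime and N₂ a positive integer. There exists a Z_{p²}-submodule C of Z_{p²}^{N₁} ⊕ Z_p^{N₂} with C = C^{⊥_E} (a Euclidean self-dual Z_{p²}Z_p-linear code of block-length (N₁,N₂)) if and only if N₂ is even and (−1)^{N₂/2} is a square in F_p. -/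
/-!
A self-dual `C` exists for block-length `(N₁, N₂)` exactly when a Euclidean self-dual code `D` of
length `N₂` exists over `𝔽_p`.

* From `D` one gets `C = (p ℤ_{p²})^{N₁} × D`.
* From `C` one gets `D = {d | (c, d) ∈ C for some c ≡ 0 mod p}`. It is self-orthogonal because the
  product of two such words is `p ⟨d, d'⟩`. If `e ⟂ D`, then `(a, d) ↦ -⟨e, d⟩` on the reduction of
  `C` mod `p` factors through `a`, hence equals `⟨c', a⟩` for some vector `c'`. So `(p c', e)` is
  orthogonal to `C` and therefore lies in `C`, which gives `e ∈ D`.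

A self-dual `D` has dimension `k` with `N₂ = 2k`. The Gram matrix of a basis of `𝔽_p^{N₂}`
extending one of `D` has a vanishing `k × k` corner, so its determinant is `(-1)^k` times a square;
it is also a square itself, so `(-1)^k` is a square. Conversely, if `(-1)^k` is a square there is
a `k × k` matrix `M` with `Mᵀ M = -1` (scalar if `-1` is a square, and built from a solution of
`a² + b² = -1` if `k` is even), and its graph `{(x, M x)}` is self-dual.
-/

open Matrix

/-! ### Self-dual codes over a field -/

/-- `D` equals its own orthogonal complement for the standard dot product. -/
def IsDotSelfDual {F ι : Type*} [Field F] [Fintype ι] (D : Submodule F (ι → F)) : Prop :=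
  ∀ m, m ∈ D ↔ ∀ c ∈ D, m ⬝ᵥ c = 0

theorem finrank_of_isDotSelfDual {F : Type*} [Field F] {n : ℕ} {D : Submodule F (Fin n → F)}
    (hD : IsDotSelfDual D) : Module.finrank F D + Module.finrank F D = n := by
  have h1 : D.map (dotProductEquiv F (Fin n)).toLinearMap = D.dualAnnihilator := by
    ext φ
    rw [Submodule.mem_dualAnnihilator]
    constructor
    · rintro ⟨d, hd, rfl⟩ w hw
      exact (hD d).1 hd w hw
    · intro h
      refine ⟨(dotProductEquiv F (Fin n)).symm φ, (hD _).2 fun c hc => ?_, by simp⟩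
      have := h c hc
      rw [← (dotProductEquiv F (Fin n)).apply_symm_apply φ] at this
      exact this
  have h2 := Subspace.finrank_add_finrank_dualAnnihilator_eq D
  have h3 : Module.finrank F (D.map (dotProductEquiv F (Fin n)).toLinearMap)
      = Module.finrank F D := LinearEquiv.finrank_map_eq (dotProductEquiv F (Fin n)) D
  rw [← h1, h3] at h2
  simpa using h2

theorem det_fromBlocks_zero_one_one_zero {F : Type*} [Field F] (k : ℕ) :
    (fromBlocks 0 1 1 0 : Matrix (Fin k ⊕ Fin k) (Fin k ⊕ Fin k) F).det = (-1) ^ k := by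
  have h : (fromBlocks 0 1 1 0 : Matrix (Fin k ⊕ Fin k) (Fin k ⊕ Fin k) F)
      * fromBlocks 1 0 1 1 = fromBlocks 1 1 1 0 := by
    simp [fromBlocks_multiply]
  have h' := congrArg det h
  rw [det_mul, det_fromBlocks_zero₁₂, det_fromBlocks_one₁₁] at h'
  simpa [det_neg] using h'

/-- The determinant of a symmetric block matrix whose upper left corner vanishes is `(-1) ^ k`
times a square. -/
theorem det_fromBlocks_zero_left {F : Type*} [Field F] (k : ℕ) (X Y : Matrix (Fin k) (Fin k) F) :
    (fromBlocks 0 X Xᵀ Y).det * (-1) ^ k = X.det ^ 2 := by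
  rw [← det_fromBlocks_zero_one_one_zero k, ← det_mul, fromBlocks_multiply]
  simp [det_fromBlocks_zero₁₂, sq]

theorem isSquare_of_isDotSelfDual {F : Type*} [Field F] {n : ℕ} {D : Submodule F (Fin n → F)}
    (hD : IsDotSelfDual D) : Even n ∧ IsSquare ((-1 : F) ^ (n / 2)) := by
  have hn := finrank_of_isDotSelfDual hD
  obtain ⟨k, hk⟩ : ∃ k, k = Module.finrank F D := ⟨_, rfl⟩
  rw [← hk] at hn
  refine ⟨⟨k, hn.symm⟩, ?_⟩
  rw [show n / 2 = k by omega]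
  obtain ⟨E, hE⟩ := D.exists_isCompl
  have hEk : Module.finrank F E = k := by
    have := Submodule.finrank_add_eq_of_isCompl hE
    simp at this
    omega
  let bD := Module.finBasisOfFinrankEq F D hk.symm
  let bE := Module.finBasisOfFinrankEq F E hEk
  let v : Fin k ⊕ Fin k → (Fin n → F) := Sum.elim (fun i => (bD i : Fin n → F)) fun i => bE i
  have hv : LinearIndependent F v := by
    refine LinearIndependent.sum_type (bD.linearIndependent.map' D.subtype (by simp))
      (bE.linearIndependent.map' E.subtype (by simp)) (hE.disjoint.mono ?_ ?_)
    · rw [Submodule.span_le]; rintro _ ⟨i, rfl⟩; exact (bD i).2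
    · rw [Submodule.span_le]; rintro _ ⟨i, rfl⟩; exact (bE i).2
  let e : Fin k ⊕ Fin k ≃ Fin n := finSumFinEquiv.trans (finCongr hn)
  let P : Matrix (Fin k ⊕ Fin k) (Fin k ⊕ Fin k) F := of fun s t => v s (e t)
  have hP : P.det ≠ 0 := by
    have : LinearIndependent F P.row :=
      hv.map' (LinearEquiv.funCongrLeft F F e).toLinearMap (by simp)
    rw [linearIndependent_rows_iff_isUnit, isUnit_iff_isUnit_det] at this
    exact this.ne_zero
  have hG : ∀ s t, (P * Pᵀ) s t = v s ⬝ᵥ v t := fun s t => by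
    simp only [mul_apply, transpose_apply, dotProduct]
    exact e.sum_comp fun j => v s j * v t j
  let X : Matrix (Fin k) (Fin k) F := of fun i j => v (.inl i) ⬝ᵥ v (.inr j)
  let Y : Matrix (Fin k) (Fin k) F := of fun i j => v (.inr i) ⬝ᵥ v (.inr j)
  have hB : P * Pᵀ = fromBlocks 0 X Xᵀ Y := by
    ext s t
    rw [hG]
    rcases s with i | i <;> rcases t with j | j
    · exact (hD _).1 (bD i).2 _ (bD j).2
    · rfl
    · exact dotProduct_comm _ _
    · rfl
  have h := det_fromBlocks_zero_left k X Y
  rw [← hB, det_mul, det_transpose] at h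
  refine ⟨X.det / P.det, ?_⟩
  field_simp
  rw [← h]; ring

theorem exists_matrix_transpose_mul_self (p : ℕ) [Fact p.Prime] (k : ℕ)
    (h : IsSquare ((-1 : ZMod p) ^ k)) :
    ∃ M : Matrix (Fin k) (Fin k) (ZMod p), Mᵀ * M = -1 := by
  rcases Nat.even_or_odd k with ⟨l, rfl⟩ | hk
  · obtain ⟨a, b, hab⟩ := ZMod.sq_add_sq p (-1)
    let M : Matrix (Fin l ⊕ Fin l) (Fin l ⊕ Fin l) (ZMod p) :=
      fromBlocks (a • 1) (b • 1) (-b • 1) (a • 1)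
    have hM : Mᵀ * M = -1 := by
      rw [← fromBlocks_one, fromBlocks_neg]
      simp only [M, fromBlocks_transpose, fromBlocks_multiply, transpose_smul, transpose_one,
        smul_mul_smul_comm, one_mul, ← add_smul, neg_zero]
      congr 1
      · rw [show a * a + -b * -b = -1 by rw [← hab]; ring, neg_one_smul]
      · rw [show a * b + -b * a = 0 by ring, zero_smul]
      · rw [show b * a + a * -b = 0 by ring, zero_smul]
      · rw [show b * b + a * a = -1 by rw [← hab]; ring, neg_one_smul]
    refine ⟨M.submatrix finSumFinEquiv.symm finSumFinEquiv.symm, ?_⟩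
    rw [transpose_submatrix, submatrix_mul_equiv, hM, submatrix_neg, Pi.neg_apply, Pi.neg_apply,
      submatrix_one_equiv]
  · rw [hk.neg_one_pow] at h
    obtain ⟨i, hi⟩ := h
    refine ⟨i • 1, ?_⟩
    rw [transpose_smul, transpose_one, smul_mul_smul_comm, one_mul, ← hi, neg_one_smul]

/-- The graph of a matrix `M` with `Mᵀ * M = -1` is a self-dual code. -/
theorem exists_isDotSelfDual (p : ℕ) [Fact p.Prime] (n : ℕ) (hn : Even n)
    (h : IsSquare ((-1 : ZMod p) ^ (n / 2))) :
    ∃ D : Submodule (ZMod p) (Fin n → ZMod p), IsDotSelfDual D := by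
  obtain ⟨k, rfl⟩ := hn
  rw [show (k + k) / 2 = k by omega] at h
  obtain ⟨M, hM⟩ := exists_matrix_transpose_mul_self p k h
  have hM' : M * Mᵀ = -1 := by
    have : (-Mᵀ) * M = 1 := by rw [Matrix.neg_mul, hM, neg_neg]
    rw [mul_eq_one_comm, Matrix.mul_neg] at this
    rw [← this, neg_neg]
  let L (d : Fin (k + k) → ZMod p) : Fin k → ZMod p := fun i => d (Fin.castAdd k i)
  let R (d : Fin (k + k) → ZMod p) : Fin k → ZMod p := fun i => d (Fin.natAdd k i)
  have hdot : ∀ c d, c ⬝ᵥ d = L c ⬝ᵥ L d + R c ⬝ᵥ R d := fun c d => Fin.sum_univ_add _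
  refine ⟨{ carrier := {d | R d = M *ᵥ L d}
            zero_mem' := (mulVec_zero M).symm
            add_mem' := ?_
            smul_mem' := ?_ }, fun m => ?_⟩
  · intro a b ha hb
    change R a + R b = M *ᵥ (L a + L b)
    rw [mulVec_add, ← ha, ← hb]
  · intro t a ha
    change t • R a = M *ᵥ (t • L a)
    rw [mulVec_smul, ← ha]
  · change R m = M *ᵥ L m ↔ ∀ c, R c = M *ᵥ L c → m ⬝ᵥ c = 0
    have key : ∀ c, R c = M *ᵥ L c → m ⬝ᵥ c = (L m + Mᵀ *ᵥ R m) ⬝ᵥ L c := fun c hc => by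
      rw [hdot, hc, add_dotProduct, dotProduct_mulVec, mulVec_transpose]
    constructor
    · intro hm c hc
      rw [key c hc, hm, mulVec_mulVec, hM, neg_mulVec, one_mulVec, add_neg_cancel,
        zero_dotProduct]
    · intro hm
      have h0 : L m + Mᵀ *ᵥ R m = 0 := by
        refine dotProduct_eq_zero _ fun w => ?_
        have hL : L (Fin.append w (M *ᵥ w)) = w := by ext i; simp [L]
        have hR : R (Fin.append w (M *ᵥ w)) = M *ᵥ w := by
          ext i; exact Fin.append_right _ _ i
        have hc : R (Fin.append w (M *ᵥ w)) = M *ᵥ L (Fin.append w (M *ᵥ w)) := by rw [hL, hR]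
        have := hm _ hc
        rwa [key _ hc, hL] at this
      have h1 := congrArg (M *ᵥ ·) h0
      simp only [mulVec_add, mulVec_mulVec, hM', neg_mulVec, one_mulVec, mulVec_zero] at h1
      exact (eq_of_sub_eq_zero (by rw [sub_eq_add_neg]; exact h1)).symm

/-! ### Reduction modulo `p` -/

/-- Reduction `ℤ/p² → ℤ/p`. -/
def redModP (p : ℕ) : ZMod (p ^ 2) →+* ZMod p :=
  ZMod.castHom (dvd_pow_self p two_ne_zero) (ZMod p)

theorem redModP_val (p : ℕ) [NeZero p] (x : ZMod p) : redModP p (x.val : ZMod (p ^ 2)) = x := by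
  simp [redModP]

theorem natCast_val_eq_redModP (p : ℕ) [NeZero p] (x : ZMod (p ^ 2)) :
    (x.val : ZMod p) = redModP p x := by
  simp [redModP]

theorem p_mul_eq_zero_iff (p : ℕ) [NeZero p] (x : ZMod (p ^ 2)) :
    (p : ZMod (p ^ 2)) * x = 0 ↔ redModP p x = 0 := by
  rw [← natCast_val_eq_redModP, ZMod.natCast_eq_zero_iff]
  conv_lhs => rw [← ZMod.natCast_zmod_val x, ← Nat.cast_mul, ZMod.natCast_eq_zero_iff]
  rw [show p ^ 2 ∣ p * x.val ↔ p * p ∣ p * x.val by rw [← sq]]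
  exact mul_dvd_mul_iff_left (NeZero.ne p)

theorem redModP_eq_zero_iff (p : ℕ) [NeZero p] (x : ZMod (p ^ 2)) :
    redModP p x = 0 ↔ ∃ y, x = p * y := by
  constructor
  · intro h
    rw [← natCast_val_eq_redModP, ZMod.natCast_eq_zero_iff] at h
    obtain ⟨y, hy⟩ := h
    exact ⟨y, by rw [← ZMod.natCast_zmod_val x, hy, Nat.cast_mul]⟩
  · rintro ⟨y, rfl⟩
    simp

/-- If the first component of `m` is `p` times a vector `y`, then the mixed form vanishes at
`(m, c)` iff the dot product of `(y, m.2)` and `c` vanishes modulo `p`. -/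
theorem form_eq_zero_iff (p N₁ N₂ : ℕ) [NeZero p] (y a : Fin N₁ → ZMod (p ^ 2))
    (d d' : Fin N₂ → ZMod p) :
    (∑ i, ((p : ZMod (p ^ 2)) * y i) * a i) + (p : ZMod (p ^ 2)) *
        ∑ j, ((d j).val : ZMod (p ^ 2)) * ((d' j).val : ZMod (p ^ 2)) = 0 ↔
      (∑ i, redModP p (y i) * redModP p (a i)) + d ⬝ᵥ d' = 0 := by
  simp only [mul_assoc]
  rw [← Finset.mul_sum, ← mul_add, p_mul_eq_zero_iff]
  simp only [map_add, map_sum, map_mul, redModP_val, dotProduct]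

/-- On a subspace of `(ι → F) × V`, a functional that vanishes on the vectors with zero first
component is the dot product of the first component with a fixed vector. -/
theorem exists_dotProduct_fst {F V : Type*} [Field F] [AddCommGroup V] [Module F V] {n : ℕ}
    (W : Submodule F ((Fin n → F) × V)) (g : V →ₗ[F] F)
    (hg : ∀ d, ((0 : Fin n → F), d) ∈ W → g d = 0) :
    ∃ c : Fin n → F, ∀ w ∈ W, c ⬝ᵥ w.1 = g w.2 := by
  let f : W →ₗ[F] (Fin n → F) := LinearMap.fst F _ _ ∘ₗ W.subtype
  let G : Module.Dual F W := g ∘ₗ LinearMap.snd F _ _ ∘ₗ W.subtype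
  have hG : G ∈ LinearMap.range f.dualMap := by
    rw [LinearMap.range_dualMap_eq_dualAnnihilator_ker, Submodule.mem_dualAnnihilator]
    rintro ⟨⟨a, d⟩, hw⟩ h0
    obtain rfl : a = 0 := h0
    exact hg d hw
  obtain ⟨φ, hφ⟩ := hG
  refine ⟨(dotProductEquiv F (Fin n)).symm φ, fun w hw => ?_⟩
  have h1 : φ w.1 = g w.2 := LinearMap.congr_fun hφ ⟨w, hw⟩
  rw [← h1]
  exact LinearMap.congr_fun ((dotProductEquiv F (Fin n)).apply_symm_apply φ) w.1

theorem stmt_16 (p N₁ N₂ : ℕ) (hp : p.Prime) (hodd : Odd p)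
    (h1 : 0 < N₁) (h2 : 0 < N₂) :
    (∃ C : AddSubgroup ((Fin N₁ → ZMod (p ^ 2)) × (Fin N₂ → ZMod p)),
      (∀ (a : ZMod (p ^ 2)) (x : (Fin N₁ → ZMod (p ^ 2)) × (Fin N₂ → ZMod p)),
        x ∈ C → ((fun i => a * x.1 i, fun j => (a.val : ZMod p) * x.2 j) :
          (Fin N₁ → ZMod (p ^ 2)) × (Fin N₂ → ZMod p)) ∈ C) ∧
      (∀ m : (Fin N₁ → ZMod (p ^ 2)) × (Fin N₂ → ZMod p), m ∈ C ↔
        ∀ c ∈ C, (∑ i, m.1 i * c.1 i) +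
          (p : ZMod (p ^ 2)) *
            ∑ j, ((m.2 j).val : ZMod (p ^ 2)) * ((c.2 j).val : ZMod (p ^ 2)) = 0)) ↔
    (Even N₂ ∧ IsSquare ((-1 : ZMod p) ^ (N₂ / 2))) := by
  have : Fact p.Prime := ⟨hp⟩
  constructor
  · rintro ⟨C, hsmul, hC⟩
    -- the reduction of `C` modulo `p`
    let W : Submodule (ZMod p) ((Fin N₁ → ZMod p) × (Fin N₂ → ZMod p)) :=
      { carrier := {w | ∃ x ∈ C, (∀ i, redModP p (x.1 i) = w.1 i) ∧ x.2 = w.2}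
        zero_mem' := ⟨0, C.zero_mem, fun i => map_zero _, rfl⟩
        add_mem' := by
          rintro v w ⟨x, hx, hx1, hx2⟩ ⟨y, hy, hy1, hy2⟩
          refine ⟨x + y, C.add_mem hx hy, fun i => ?_, ?_⟩
          · simp [hx1, hy1]
          · simp [hx2, hy2]
        smul_mem' := by
          rintro t w ⟨x, hx, hx1, hx2⟩
          refine ⟨_, hsmul (t.val : ZMod (p ^ 2)) x hx, fun i => ?_, ?_⟩
          · simp only [map_mul, redModP_val, hx1]
            rfl
          · ext j
            simp only [natCast_val_eq_redModP, redModP_val, hx2]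
            rfl }
    let D : Submodule (ZMod p) (Fin N₂ → ZMod p) := W.comap (LinearMap.inr _ _ _)
    have hmemD : ∀ d, d ∈ D ↔ ∃ y : Fin N₁ → ZMod (p ^ 2), ((fun i => (p : ZMod (p ^ 2)) * y i), d) ∈ C := by
      intro d
      constructor
      · rintro ⟨⟨x, d'⟩, hx, hx1, hx2⟩
        choose y hy using fun i => (redModP_eq_zero_iff p (x i)).1 (hx1 i)
        obtain rfl : d' = d := hx2
        refine ⟨y, ?_⟩
        rwa [← show x = fun i => (p : ZMod (p ^ 2)) * y i from funext hy]
      · rintro ⟨y, hy⟩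
        exact ⟨_, hy, fun i => (redModP_eq_zero_iff p _).2 ⟨y i, rfl⟩, rfl⟩
    refine isSquare_of_isDotSelfDual (D := D) fun e => ⟨fun he d hd => ?_, fun he => ?_⟩
    · obtain ⟨y, hy⟩ := (hmemD e).1 he
      obtain ⟨z, hz⟩ := (hmemD d).1 hd
      have := (form_eq_zero_iff p N₁ N₂ y _ e d).1 ((hC _).1 hy _ hz)
      simpa using this
    · obtain ⟨c, hc⟩ := exists_dotProduct_fst W (-(dotProductEquiv (ZMod p) (Fin N₂) e))
        fun d hd => by
          have : e ⬝ᵥ d = 0 := he d hd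
          simp [this]
      refine (hmemD e).2 ⟨fun i => ((c i).val : ZMod (p ^ 2)), (hC _).2 fun x hx => ?_⟩
      refine (form_eq_zero_iff p N₁ N₂ _ _ e x.2).2 ?_
      have := hc ⟨fun i => redModP p (x.1 i), x.2⟩ ⟨x, hx, fun i => rfl, rfl⟩
      simp only [redModP_val]
      change c ⬝ᵥ (fun i => redModP p (x.1 i)) = -(e ⬝ᵥ x.2) at this
      change c ⬝ᵥ (fun i => redModP p (x.1 i)) + _ = 0
      rw [this, neg_add_cancel]
  · rintro ⟨hn, hs⟩
    obtain ⟨D, hD⟩ := exists_isDotSelfDual p N₂ hn hs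
    refine ⟨{ carrier := {x | (∀ i, redModP p (x.1 i) = 0) ∧ x.2 ∈ D}
              zero_mem' := ⟨fun i => map_zero _, D.zero_mem⟩
              add_mem' := ?_
              neg_mem' := ?_ }, ?_, fun m => ?_⟩
    · rintro x y ⟨hx, hx'⟩ ⟨hy, hy'⟩
      exact ⟨fun i => by simp [hx, hy], D.add_mem hx' hy'⟩
    · rintro x ⟨hx, hx'⟩
      exact ⟨fun i => by simp [hx], D.neg_mem hx'⟩
    · rintro a x ⟨hx, hx'⟩
      exact ⟨fun i => by simp [hx], D.smul_mem (a.val : ZMod p) hx'⟩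
    · change ((∀ i, redModP p (m.1 i) = 0) ∧ m.2 ∈ D) ↔
        ∀ c : (Fin N₁ → ZMod (p ^ 2)) × (Fin N₂ → ZMod p),
          ((∀ i, redModP p (c.1 i) = 0) ∧ c.2 ∈ D) → _
      constructor
      · rintro ⟨hm, hm'⟩ c ⟨hc, hc'⟩
        choose y hy using fun i => (redModP_eq_zero_iff p (m.1 i)).1 (hm i)
        simp only [hy]
        rw [form_eq_zero_iff]
        simp [hc, (hD _).1 hm' _ hc']
      · intro h
        have hm : ∀ i, redModP p (m.1 i) = 0 := by
          intro i
          -- test against `p` times a unit vector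
          have := h (Pi.single i (p : ZMod (p ^ 2)), 0) ⟨fun j => by
            rcases eq_or_ne j i with rfl | hj
            · simp
            · simp [hj], D.zero_mem⟩
          rw [← p_mul_eq_zero_iff, mul_comm]
          simpa [Pi.single_apply] using this
        refine ⟨hm, (hD _).2 fun c hc => ?_⟩
        have := h (0, c) ⟨fun i => map_zero _, hc⟩
        choose y hy using fun i => (redModP_eq_zero_iff p (m.1 i)).1 (hm i)
        simp only [hy] at this
        rw [form_eq_zero_iff] at this
        simpa using this
end
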